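/- Mertens' theorem for number fields: if K is a number field, then there exists a constant C such that ∑_{N(𝔭) ≤ x} 1/N(𝔭) = log log x + C + O(1/log x) as x → ∞, where the sum runs over all nonzero prime ideals 𝔭 of the ring of integers O_K with norm N(𝔭) at most x. -/

import Mathlib

open Filter Asymptotics

/-! The sum of `log N(α)` over the integers `α` of `K` whose coordinates in an integral basis lie in
`{1, …, X}` is evaluated in two ways; write `d` for the degree of `K`. Since `N(α)` is the product
of the `d` complex absolute values of `α`, each of logarithm `log X + O(1)` on average, the sum is
`X ^ d * log (X ^ d) + O(X ^ d)`. Factoring each `(α)` into prime ideals expresses the same sum as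
`∑ log N(𝔭)` over the pairs consisting of a power `𝔭 ^ k` and an `α ∈ 𝔭 ^ k` in the box. An ideal
`I` contains a nonzero element with coordinates at most `N(I) ^ (1 / d)`, so every class modulo `I`
has a representative of comparable size and the box meets `I` in `X ^ d / N(I) + O(X ^ (d - 1) *
N(I) ^ (1 / d - 1))` points. The bound `∑_{N(𝔭) ≤ n} log N(𝔭) = O(n)`, which holds because the
product of these primes divides the primorial of `n`, makes the errors sum to `O(X ^ d)`. Hence
`∑_{N(𝔭) ≤ n} log N(𝔭) / N(𝔭) = log n + O(1)`, and partial summation finishes the proof. -/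

namespace NumberFieldMertens

open Finset Real

section PartialSummation

theorem mul_sum_le_sum_mul_of_antitoneOn {c w : ℕ → ℝ}
    (hc : ∀ n, 0 ≤ ∑ m ∈ Icc 1 n, c m) (hw : AntitoneOn w (Set.Ici 1)) (n : ℕ) :
    w n * ∑ m ∈ Icc 1 n, c m ≤ ∑ m ∈ Icc 1 n, c m * w m := by
  induction n with
  | zero => simp
  | succ n ih =>
    rcases Nat.eq_zero_or_pos n with rfl | hn
    · simp [mul_comm]
    have hmul : w (n + 1) * ∑ m ∈ Icc 1 n, c m ≤ w n * ∑ m ∈ Icc 1 n, c m :=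
      mul_le_mul_of_nonneg_right (hw hn (Nat.le_add_left 1 n) n.le_succ) (hc n)
    rw [sum_Icc_succ_top n.succ_pos, sum_Icc_succ_top n.succ_pos, mul_add]
    linarith

theorem sum_mul_le_sum_mul_of_antitoneOn {a c w : ℕ → ℝ}
    (hac : ∀ n, ∑ m ∈ Icc 1 n, a m ≤ ∑ m ∈ Icc 1 n, c m) (hw : AntitoneOn w (Set.Ici 1))
    (hw₀ : ∀ m, 0 ≤ w m) (n : ℕ) :
    ∑ m ∈ Icc 1 n, a m * w m ≤ ∑ m ∈ Icc 1 n, c m * w m := by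
  have hnonneg : ∀ n, 0 ≤ ∑ m ∈ Icc 1 n, (c m - a m) := fun n => by
    rw [sum_sub_distrib]
    exact sub_nonneg.2 (hac n)
  have habel := (mul_nonneg (hw₀ n) (hnonneg n)).trans
    (mul_sum_le_sum_mul_of_antitoneOn hnonneg hw n)
  simpa only [sub_mul, sum_sub_distrib, sub_nonneg] using habel

theorem sum_rpow_sub_one_le {s : ℝ} (hs₀ : 0 < s) (hs₁ : s ≤ 1) (n : ℕ) :
    ∑ m ∈ Icc 1 n, (m : ℝ) ^ (s - 1) ≤ (n : ℝ) ^ s / s := by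
  induction n with
  | zero => simp [Real.zero_rpow hs₀.ne']
  | succ n ih =>
    have hn : (0 : ℝ) < n + 1 := by positivity
    have hbernoulli : ((n : ℝ) / (n + 1)) ^ s ≤ 1 - s / (n + 1) := by
      convert rpow_one_add_le_one_add_mul_self (s := -1 / ((n : ℝ) + 1)) ?_ hs₀.le hs₁ using 2
      · field_simp
        ring
      · ring
      · rw [le_div_iff₀ hn]
        linarith [n.cast_nonneg (α := ℝ)]
    rw [div_rpow n.cast_nonneg hn.le, div_le_iff₀ (by positivity)] at hbernoulli
    rw [sum_Icc_succ_top n.succ_pos, Nat.cast_succ, rpow_sub_one hn.ne']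
    refine (add_le_add_left ih _).trans ?_
    rw [← le_sub_iff_add_le, div_le_iff₀ hs₀, sub_mul, div_mul_cancel₀ _ hs₀.ne']
    convert hbernoulli using 1
    ring

theorem abs_pow_sub_pow_le_of_abs_sub_le {x y T : ℝ} (hx : 0 ≤ x) (hy : 0 ≤ y)
    (hxy : |y - x| ≤ T) (n : ℕ) : |y ^ n - x ^ n| ≤ T * n * (x + T) ^ (n - 1) := by
  refine (abs_pow_sub_pow_le ..).trans ?_
  rw [abs_of_nonneg hx, abs_of_nonneg hy]
  have hT : 0 ≤ T := (abs_nonneg _).trans hxy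
  gcongr
  exact max_le (by linarith [(abs_le.1 hxy).2]) (by linarith)

theorem exists_dist_le_of_dist_succ_le {E : Type*} [PseudoMetricSpace E] [CompleteSpace E]
    {f : ℕ → E} {w : ℕ → ℝ} (hw : Tendsto w atTop (nhds 0))
    (hf : ∀ n, dist (f n) (f (n + 1)) ≤ w n - w (n + 1)) :
    ∃ L, ∀ n, dist (f n) L ≤ w n := by
  have hanti : Antitone w :=
    antitone_nat_of_succ_le fun n => sub_nonneg.1 (dist_nonneg.trans (hf n))
  have hdist : ∀ m n, m ≤ n → dist (f m) (f n) ≤ w m := fun m n hmn =>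
    calc dist (f m) (f n) ≤ ∑ k ∈ Ico m n, (w k - w (k + 1)) :=
          dist_le_Ico_sum_of_dist_le hmn fun _ _ => hf _
      _ = w m - w n := by
        rw [← neg_sub (w n), ← sum_Ico_sub w hmn, ← sum_neg_distrib]
        simp only [neg_sub]
      _ ≤ w m := sub_le_self _ (hanti.le_of_tendsto hw n)
  obtain ⟨L, hL⟩ := cauchySeq_tendsto_of_complete (cauchySeq_of_le_tendsto_0' w hdist hw)
  exact ⟨L, fun m => le_of_tendsto (tendsto_const_nhds.dist hL)
    ((eventually_ge_atTop m).mono fun n => hdist m n)⟩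

theorem abs_log_sub_log_sub_div_le {u v : ℝ} (hu : 0 < u) (hv : 0 < v) :
    |log v - log u - (v - u) / v| ≤ (v - u) * (1 / u - 1 / v) := by
  have hupper : log v - log u ≤ (v - u) / u := by
    rw [← log_div hv.ne' hu.ne', sub_div, div_self hu.ne']
    exact log_le_sub_one_of_pos (by positivity)
  have hlower : (v - u) / v ≤ log v - log u := by
    rw [← log_div hv.ne' hu.ne', sub_div, div_self hv.ne', ← inv_div]
    exact one_sub_inv_le_log_of_pos (by positivity)
  rw [abs_of_nonneg (sub_nonneg.2 hlower), mul_sub, mul_one_div, mul_one_div]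
  exact sub_le_sub_right hupper _

theorem log_sub_log_le_one {x y : ℝ} (hx : 1 ≤ x) (hxy : x ≤ y) (hyx : y ≤ x + 1) :
    log y - log x ≤ 1 := by
  have hx₀ : 0 < x := one_pos.trans_le hx
  rw [← log_div (hx₀.trans_le hxy).ne' hx₀.ne']
  calc log (y / x) ≤ y / x - 1 := log_le_sub_one_of_pos (div_pos (hx₀.trans_le hxy) hx₀)
    _ ≤ 1 := by rw [sub_le_iff_le_add, div_le_iff₀ hx₀]; linarith

/-- The error term `∑_{m ≤ n} a m - log n` in an estimate of the type of Mertens' first theorem. -/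
noncomputable def logRemainder (a : ℕ → ℝ) (n : ℕ) : ℝ :=
  ∑ m ∈ Icc 1 n, a m - log n

/-- The quantity `∑_{m ≤ n} a m / log m - log log n`, whose limit is the constant in an estimate of
the type of Mertens' second theorem. As `log 1 = 0`, the term `m = 1` contributes nothing. -/
noncomputable def logLogRemainder (a : ℕ → ℝ) (n : ℕ) : ℝ :=
  ∑ m ∈ Icc 1 n, a m / log m - log (log n)

theorem abs_logLogRemainder_sub_increment_le {a : ℕ → ℝ} {C : ℝ} {n : ℕ}
    (hC : |logRemainder a n| ≤ C) (hn : 2 ≤ n) :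
    |(logLogRemainder a (n + 1) - logRemainder a (n + 1) / log (n + 1 : ℕ)) -
        (logLogRemainder a n - logRemainder a n / log n)| ≤
      (C + 1) * (1 / log n - 1 / log (n + 1 : ℕ)) := by
  have hn₁ : (1 : ℝ) < n := by exact_mod_cast hn
  have hsucc : (n : ℝ) ≤ (n + 1 : ℕ) := by exact_mod_cast n.le_succ
  have hu : 0 < log n := log_pos hn₁
  have huv : log n ≤ log (n + 1 : ℕ) := log_le_log (by linarith) hsucc
  have hvu : log (n + 1 : ℕ) - log n ≤ 1 := log_sub_log_le_one hn₁.le hsucc (by simp)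
  simp only [logLogRemainder, logRemainder, sum_Icc_succ_top n.succ_pos] at hC ⊢
  set u := log n
  set v := log (n + 1 : ℕ)
  set R := ∑ m ∈ Icc 1 n, a m - u
  have hv : 0 < v := hu.trans_le huv
  have hw : 0 ≤ 1 / u - 1 / v := sub_nonneg.2 (one_div_le_one_div_of_le hu huv)
  calc _ = |R * (1 / u - 1 / v) - (log v - log u - (v - u) / v)| := by
        congr 1
        simp only [R]
        field_simp
        ring
    _ ≤ |R| * (1 / u - 1 / v) + (v - u) * (1 / u - 1 / v) := by
        refine (abs_sub _ _).trans (add_le_add ?_ (abs_log_sub_log_sub_div_le hu hv))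
        rw [abs_mul, abs_of_nonneg hw]
    _ ≤ (C + 1) * (1 / u - 1 / v) := by
        rw [← add_mul]
        gcongr

theorem exists_logLogRemainder_sub_isBigO {a : ℕ → ℝ}
    (ha : logRemainder a =O[atTop] fun _ => (1 : ℝ)) :
    ∃ L : ℝ, (fun n => logLogRemainder a n - L) =O[atTop] fun n : ℕ => 1 / log n := by
  obtain ⟨C, hC⟩ := isBigO_one_nat_atTop_iff.1 ha
  simp only [norm_eq_abs] at hC
  set w : ℕ → ℝ := fun n => (C + 1) * (1 / log n)
  have hw : Tendsto w atTop (nhds 0) := by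
    simpa [w] using
      (tendsto_log_atTop.comp tendsto_natCast_atTop_atTop).inv_tendsto_atTop.const_mul (C + 1)
  -- Subtracting `logRemainder a n / log n` makes the increments telescope against `1 / log n`.
  obtain ⟨L, hL⟩ := exists_dist_le_of_dist_succ_le
    (f := fun n => logLogRemainder a (n + 2) - logRemainder a (n + 2) / log (n + 2 : ℕ))
    (w := fun n => w (n + 2)) (hw.comp (tendsto_add_atTop_nat 2)) fun n => by
      rw [dist_comm, dist_eq, ← mul_sub]
      exact abs_logLogRemainder_sub_increment_le (hC _) (Nat.le_add_left 2 n)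
  refine ⟨L, IsBigO.of_bound (2 * C + 1) ((eventually_ge_atTop 2).mono fun n hn => ?_)⟩
  obtain ⟨k, rfl⟩ := Nat.exists_eq_add_of_le' hn
  have hlog : 0 ≤ 1 / log (k + 2 : ℕ) := one_div_nonneg.2 (log_natCast_nonneg _)
  have hR : |logRemainder a (k + 2) / log (k + 2 : ℕ)| ≤ C * (1 / log (k + 2 : ℕ)) := by
    rw [div_eq_mul_one_div, abs_mul, abs_of_nonneg hlog]
    exact mul_le_mul_of_nonneg_right (hC _) hlog
  rw [norm_eq_abs, norm_of_nonneg hlog]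
  calc |logLogRemainder a (k + 2) - L|
      = |(logLogRemainder a (k + 2) - logRemainder a (k + 2) / log (k + 2 : ℕ) - L) +
          logRemainder a (k + 2) / log (k + 2 : ℕ)| := by
        congr 1
        ring
    _ ≤ (C + 1) * (1 / log (k + 2 : ℕ)) + C * (1 / log (k + 2 : ℕ)) :=
        (abs_add_le _ _).trans (add_le_add (hL k) hR)
    _ = (2 * C + 1) * (1 / log (k + 2 : ℕ)) := by ring

theorem one_div_log_floor_isBigO :
    (fun x : ℝ => 1 / log ⌊x⌋₊) =O[atTop] fun x => 1 / log x := by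
  simp only [one_div]
  exact (isEquivalent_nat_floor.log tendsto_id).inv.isBigO

theorem log_log_floor_sub_log_log_isBigO :
    (fun x : ℝ => log (log ⌊x⌋₊) - log (log x)) =O[atTop] fun x => 1 / log x := by
  refine IsBigO.trans (IsBigO.of_bound 1 ?_) one_div_log_floor_isBigO
  filter_upwards [eventually_ge_atTop 2] with x hx
  have hfloor : (2 : ℝ) ≤ ⌊x⌋₊ := by exact_mod_cast Nat.le_floor (by exact_mod_cast hx)
  have hle : (⌊x⌋₊ : ℝ) ≤ x := Nat.floor_le (by linarith)
  have hu : 0 < log ⌊x⌋₊ := log_pos (by linarith)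
  have huv : log ⌊x⌋₊ ≤ log x := log_le_log (by linarith) hle
  rw [one_mul, norm_sub_rev, norm_of_nonneg (sub_nonneg.2 (log_le_log hu huv)),
    norm_of_nonneg (by positivity), ← log_div (hu.trans_le huv).ne' hu.ne']
  calc log (log x / log ⌊x⌋₊) ≤ log x / log ⌊x⌋₊ - 1 :=
        log_le_sub_one_of_pos (div_pos (hu.trans_le huv) hu)
    _ = (log x - log ⌊x⌋₊) / log ⌊x⌋₊ := by rw [sub_div, div_self hu.ne']
    _ ≤ 1 / log ⌊x⌋₊ := by
        gcongr
        exact log_sub_log_le_one (by linarith) hle (Nat.lt_floor_add_one x).le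

end PartialSummation

section CoordinateBox

variable {ι M : Type*} [Fintype ι] [AddCommGroup M] (b : Module.Basis ι ℤ M)

/-- The sup norm of the coordinates of an element of a lattice with respect to a basis. -/
noncomputable def coordNorm (α : M) : ℝ := ‖b.equivFun α‖

theorem coordNorm_nonneg (α : M) : 0 ≤ coordNorm b α := norm_nonneg _

theorem abs_coord_le_coordNorm (α : M) (i : ι) : |(b.equivFun α i : ℝ)| ≤ coordNorm b α :=
  norm_le_pi_norm (b.equivFun α) i

theorem coordNorm_le_iff {α : M} {T : ℝ} (hT : 0 ≤ T) :
    coordNorm b α ≤ T ↔ ∀ i, |(b.equivFun α i : ℝ)| ≤ T :=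
  pi_norm_le_iff_of_nonneg hT

theorem abs_coord_le_of_coordNorm_le {α : M} {D : ℕ} (h : coordNorm b α ≤ D) (i : ι) :
    |b.equivFun α i| ≤ D := by
  exact_mod_cast (abs_coord_le_coordNorm b α i).trans h

theorem norm_map_le_sum_mul_coordNorm {E : Type*} [SeminormedAddCommGroup E] (f : M →+ E) (α : M) :
    ‖f α‖ ≤ (∑ i, ‖f (b i)‖) * coordNorm b α := by
  calc ‖f α‖ = ‖∑ i, b.equivFun α i • f (b i)‖ := by
        conv_lhs => rw [← b.sum_equivFun α, map_sum]
        simp only [map_zsmul]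
    _ ≤ ∑ i, ‖f (b i)‖ * coordNorm b α :=
        norm_sum_le_of_le _ fun i _ => (norm_zsmul_le _ _).trans <| by
          rw [mul_comm]
          exact mul_le_mul_of_nonneg_left (abs_coord_le_coordNorm b α i) (norm_nonneg _)
    _ = (∑ i, ‖f (b i)‖) * coordNorm b α := (sum_mul ..).symm

theorem exists_coordNorm_mul_le {R : Type*} [Ring R] (b : Module.Basis ι ℤ R) :
    ∃ C, 0 ≤ C ∧ ∀ α β, coordNorm b (α * β) ≤ C * (coordNorm b α * coordNorm b β) := by
  have hright : ∀ α β, coordNorm b (α * β) ≤ (∑ i, coordNorm b (b i * β)) * coordNorm b α :=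
    fun α β => norm_map_le_sum_mul_coordNorm b
      ((b.equivFun : R →+ ι → ℤ).comp (AddMonoidHom.mulRight β)) α
  have hleft : ∀ α β, coordNorm b (α * β) ≤ (∑ j, coordNorm b (α * b j)) * coordNorm b β :=
    fun α β => norm_map_le_sum_mul_coordNorm b
      ((b.equivFun : R →+ ι → ℤ).comp (AddMonoidHom.mulLeft α)) β
  refine ⟨∑ i, ∑ j, coordNorm b (b i * b j),
    sum_nonneg fun i _ => sum_nonneg fun j _ => coordNorm_nonneg b _, fun α β => ?_⟩
  calc coordNorm b (α * β) ≤ (∑ i, coordNorm b (b i * β)) * coordNorm b α := hright α β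
    _ ≤ (∑ i, (∑ j, coordNorm b (b i * b j)) * coordNorm b β) * coordNorm b α :=
        mul_le_mul_of_nonneg_right (sum_le_sum fun i _ => hleft (b i) β) (coordNorm_nonneg b α)
    _ = (∑ i, ∑ j, coordNorm b (b i * b j)) * (coordNorm b α * coordNorm b β) := by
        rw [← sum_mul, mul_assoc, mul_comm (coordNorm b β)]

theorem exists_section_coordNorm_le_floor {H : AddSubgroup M} {T : ℝ}
    (hrep : ∀ α, ∃ ρ, α - ρ ∈ H ∧ coordNorm b ρ ≤ T) (q : M ⧸ H) :
    ∃ ρ : M, (ρ : M ⧸ H) = q ∧ coordNorm b ρ ≤ ⌊T⌋₊ := by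
  obtain ⟨α, rfl⟩ := QuotientAddGroup.mk_surjective q
  obtain ⟨ρ, hρ, hρT⟩ := hrep α
  refine ⟨ρ, ?_, (coordNorm_le_iff b (Nat.cast_nonneg _)).2 fun i => ?_⟩
  · rwa [eq_comm, ← sub_eq_zero, ← QuotientAddGroup.mk_sub, QuotientAddGroup.eq_zero_iff]
  · have hi := (abs_coord_le_coordNorm b ρ i).trans hρT
    rw [← Int.cast_abs, ← Nat.cast_natAbs] at hi ⊢
    exact_mod_cast Nat.le_floor hi

variable [DecidableEq ι]

/-- The elements of a lattice all of whose coordinates lie in the interval `(lo, hi]`. The half-open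
interval is chosen so that `coordBox b 0 X` does not contain zero. -/
noncomputable def coordBox (lo hi : ℤ) : Finset M :=
  (Fintype.piFinset fun _ : ι => Ioc lo hi).map b.equivFun.symm.toEquiv.toEmbedding

theorem mem_coordBox {lo hi : ℤ} {α : M} :
    α ∈ coordBox b lo hi ↔ ∀ i, lo < b.equivFun α i ∧ b.equivFun α i ≤ hi := by
  simp [coordBox, mem_map_equiv, Fintype.mem_piFinset]

theorem card_coordBox (lo hi : ℤ) :
    #(coordBox b lo hi) = (hi - lo).toNat ^ Fintype.card ι := by
  simp [coordBox, Fintype.card_piFinset]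

theorem card_coordBox_zero (X : ℕ) : #(coordBox b 0 X) = X ^ Fintype.card ι := by
  simp [card_coordBox]

theorem ne_zero_of_mem_coordBox [Nonempty ι] {X : ℕ} {α : M} (hα : α ∈ coordBox b 0 X) :
    α ≠ 0 := by
  rintro rfl
  simpa using (mem_coordBox b).1 hα (Classical.arbitrary ι)

theorem coordNorm_le_of_mem_coordBox {X : ℕ} {α : M} (hα : α ∈ coordBox b 0 X) :
    coordNorm b α ≤ X :=
  (coordNorm_le_iff b X.cast_nonneg).2 fun i => by
    have hi := (mem_coordBox b).1 hα i
    rw [abs_of_nonneg (by exact_mod_cast hi.1.le)]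
    exact_mod_cast hi.2

open Classical in
/-- The number of elements of a set `S` whose coordinates all lie in `{1, …, X}`. -/
noncomputable def boxCount (X : ℕ) (S : Set M) : ℕ := #{α ∈ coordBox b 0 X | α ∈ S}

open Classical in
theorem boxCount_mul_index_le {H : AddSubgroup M} [H.FiniteIndex] {ρ : M ⧸ H → M} {D : ℕ}
    (hρ : ∀ q, (ρ q : M ⧸ H) = q) (hD : ∀ q, coordNorm b (ρ q) ≤ D) (X : ℕ) :
    boxCount b X H * H.index ≤ (X + 2 * D) ^ Fintype.card ι := by
  have := Fintype.ofFinite (M ⧸ H)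
  have hbox : #(coordBox b (-D) (X + D)) = (X + 2 * D) ^ Fintype.card ι := by
    rw [card_coordBox]
    congr 1
    omega
  rw [AddSubgroup.index_eq_card, Nat.card_eq_fintype_card, ← card_univ, boxCount, ← card_product,
    ← hbox]
  refine card_le_card_of_injOn (fun p => p.1 + ρ p.2) ?_ ?_
  · rintro ⟨α, q⟩ h
    have hα := (mem_coordBox b).1 (mem_filter.1 (mem_product.1 h).1).1
    refine (mem_coordBox b).2 fun i => ?_
    have hi : 0 < b.equivFun α i ∧ b.equivFun α i ≤ X := hα i
    have hq := abs_le.1 (abs_coord_le_of_coordNorm_le b (hD q) i)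
    simp only [map_add, Pi.add_apply]
    omega
  · rintro ⟨α, q⟩ h ⟨α', q'⟩ h' heq
    have hmk : ∀ p ∈ {α ∈ coordBox b 0 X | α ∈ (H : Set M)} ×ˢ (univ : Finset (M ⧸ H)),
        ((p.1 + ρ p.2 : M) : M ⧸ H) = p.2 := fun p hp => by
      rw [QuotientAddGroup.mk_add, (QuotientAddGroup.eq_zero_iff p.1).2
        (mem_filter.1 (mem_product.1 hp).1).2, hρ, zero_add]
    obtain rfl : q = q' := (hmk _ h).symm.trans ((congrArg _ heq).trans (hmk _ h'))
    simpa using heq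

open Classical in
theorem le_boxCount_mul_index {H : AddSubgroup M} [H.FiniteIndex] {ρ : M ⧸ H → M} {D : ℕ}
    (hρ : ∀ q, (ρ q : M ⧸ H) = q) (hD : ∀ q, coordNorm b (ρ q) ≤ D) (X : ℕ) :
    (X - 2 * D) ^ Fintype.card ι ≤ boxCount b X H * H.index := by
  have := Fintype.ofFinite (M ⧸ H)
  have hbox : #(coordBox b D (X - D)) = (X - 2 * D) ^ Fintype.card ι := by
    rw [card_coordBox]
    congr 1
    omega
  rw [AddSubgroup.index_eq_card, Nat.card_eq_fintype_card, ← card_univ (α := M ⧸ H), boxCount,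
    ← card_product, ← hbox]
  refine card_le_card_of_injOn (fun α => (α - ρ α, (α : M ⧸ H))) ?_ ?_
  · intro α hα
    refine mem_product.2 ⟨mem_filter.2 ⟨(mem_coordBox b).2 fun i => ?_, ?_⟩, mem_univ _⟩
    · have hi := (mem_coordBox b).1 hα i
      have hq := abs_le.1 (abs_coord_le_of_coordNorm_le b (hD α) i)
      simp only [map_sub, Pi.sub_apply]
      omega
    · rw [SetLike.mem_coe, ← QuotientAddGroup.eq_zero_iff, QuotientAddGroup.mk_sub, hρ, sub_self]
  · intro α _ β _ heq
    obtain ⟨hsub, hmk⟩ := Prod.mk.inj heq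
    rw [hmk] at hsub
    exact sub_left_injective hsub

theorem abs_boxCount_mul_index_sub_le {H : AddSubgroup M} [H.FiniteIndex] {T : ℝ} (hT : 0 ≤ T)
    (hrep : ∀ α, ∃ ρ, α - ρ ∈ H ∧ coordNorm b ρ ≤ T) (X : ℕ) :
    |(boxCount b X H : ℝ) * H.index - (X : ℝ) ^ Fintype.card ι| ≤
      2 * T * Fintype.card ι * (X + 2 * T) ^ (Fintype.card ι - 1) := by
  choose ρ hρ hD using exists_section_coordNorm_le_floor b hrep
  have hfloor : (⌊T⌋₊ : ℝ) ≤ T := Nat.floor_le hT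
  have hupper : (boxCount b X H : ℝ) * H.index ≤ ((X + 2 * ⌊T⌋₊ : ℕ) : ℝ) ^ Fintype.card ι := by
    exact_mod_cast boxCount_mul_index_le b hρ hD X
  have hlower : ((X - 2 * ⌊T⌋₊ : ℕ) : ℝ) ^ Fintype.card ι ≤ (boxCount b X H : ℝ) * H.index := by
    exact_mod_cast le_boxCount_mul_index b hρ hD X
  have hadd : |((X + 2 * ⌊T⌋₊ : ℕ) : ℝ) - X| ≤ 2 * T := by
    push_cast
    rw [abs_le]
    constructor <;> linarith
  have hsub : |((X - 2 * ⌊T⌋₊ : ℕ) : ℝ) - X| ≤ 2 * T := by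
    have hle : ((X - 2 * ⌊T⌋₊ : ℕ) : ℝ) ≤ X := by exact_mod_cast Nat.sub_le _ _
    have hge : (X : ℝ) ≤ (X - 2 * ⌊T⌋₊ : ℕ) + 2 * ⌊T⌋₊ := by exact_mod_cast le_tsub_add
    rw [abs_le]
    constructor <;> linarith
  have hpow₁ := abs_pow_sub_pow_le_of_abs_sub_le X.cast_nonneg (Nat.cast_nonneg _) hadd
    (Fintype.card ι)
  have hpow₂ := abs_pow_sub_pow_le_of_abs_sub_le X.cast_nonneg (Nat.cast_nonneg _) hsub
    (Fintype.card ι)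
  rw [abs_le] at hpow₁ hpow₂ ⊢
  constructor <;> linarith

omit [DecidableEq ι] in
theorem exists_ne_zero_mem_coordNorm_le [Nonempty ι] (H : AddSubgroup M) [H.FiniteIndex] :
    ∃ γ ∈ H, γ ≠ 0 ∧ coordNorm b γ ≤ (H.index : ℝ) ^ (Fintype.card ι : ℝ)⁻¹ := by
  classical
  have := Fintype.ofFinite (M ⧸ H)
  set y : ℝ := (H.index : ℝ) ^ (Fintype.card ι : ℝ)⁻¹
  have hy : 0 ≤ y := by positivity
  have hcard : #(univ : Finset (M ⧸ H)) < #(coordBox b 0 (⌊y⌋₊ + 1 : ℕ)) := by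
    have hindex : (H.index : ℝ) < ((⌊y⌋₊ + 1 : ℕ) : ℝ) ^ Fintype.card ι := by
      rw [← rpow_inv_natCast_pow (Nat.cast_nonneg H.index) (Fintype.card_ne_zero (α := ι))]
      exact pow_lt_pow_left₀ (by exact_mod_cast Nat.lt_floor_add_one y) hy Fintype.card_ne_zero
    rw [card_univ, ← Nat.card_eq_fintype_card, ← AddSubgroup.index_eq_card, card_coordBox_zero]
    exact_mod_cast hindex
  obtain ⟨α, hα, β, hβ, hne, heq⟩ := exists_ne_map_eq_of_card_lt_of_maps_to hcard
    (f := fun α : M => (α : M ⧸ H)) fun _ _ => mem_coe.2 (mem_univ _)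
  refine ⟨α - β, ?_, sub_ne_zero.2 hne, (coordNorm_le_iff b hy).2 fun i => ?_⟩
  · rw [← QuotientAddGroup.eq_zero_iff, QuotientAddGroup.mk_sub, sub_eq_zero]
    exact heq
  · have hαi := (mem_coordBox b).1 hα i
    have hβi := (mem_coordBox b).1 hβ i
    have hdiff : |b.equivFun α i - b.equivFun β i| ≤ ⌊y⌋₊ := by
      rw [abs_le]
      omega
    refine le_trans ?_ (Nat.floor_le hy)
    simp only [map_sub, Pi.sub_apply]
    exact_mod_cast hdiff

end CoordinateBox

section IdealsInBoxes

variable {ι R : Type*} [Fintype ι] [CommRing R] (b : Module.Basis ι ℤ R)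

theorem exists_eq_zsmul_add_coordNorm_le {M : Type*} [AddCommGroup M] (b : Module.Basis ι ℤ M)
    {m : ℤ} (hm : 0 < m) (α : M) : ∃ q s : M, α = m • q + s ∧ coordNorm b s ≤ m := by
  refine ⟨b.equivFun.symm fun i => b.equivFun α i / m, b.equivFun.symm fun i => b.equivFun α i % m,
    b.equivFun.injective ?_, (coordNorm_le_iff b (by exact_mod_cast hm.le)).2 fun i => ?_⟩
  · ext i
    simp [-Module.Basis.equivFun_apply, -Module.Basis.equivFun_symm_apply, Int.mul_ediv_add_emod]
  · rw [LinearEquiv.apply_symm_apply, abs_of_nonneg (by exact_mod_cast Int.emod_nonneg _ hm.ne')]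
    exact_mod_cast (Int.emod_lt_of_pos _ hm).le

-- Divide `α * (m / γ)` by the integer `m` and multiply back by `γ / m`.
theorem exists_coordNorm_sub_mul_le {C : ℝ} (hC : 0 ≤ C)
    (hmul : ∀ α β, coordNorm b (α * β) ≤ C * (coordNorm b α * coordNorm b β)) {m : ℤ} (hm : 0 < m)
    {γ : R} (hγ : γ ∣ (m : R)) (α : R) : ∃ q, coordNorm b (α - γ * q) ≤ C * coordNorm b γ := by
  obtain ⟨δ, hδ⟩ := hγ
  obtain ⟨q, s, hqs, hs⟩ := exists_eq_zsmul_add_coordNorm_le b hm (α * δ)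
  have hm' : (0 : ℝ) < m := by exact_mod_cast hm
  have hsmul : m • (α - γ * q) = γ * s := by
    rw [eq_sub_of_add_eq' hqs.symm, zsmul_eq_mul, zsmul_eq_mul, hδ]
    ring
  refine ⟨q, le_of_mul_le_mul_left ?_ hm'⟩
  calc (m : ℝ) * coordNorm b (α - γ * q) = coordNorm b (m • (α - γ * q)) := by
        rw [coordNorm, coordNorm, map_zsmul, norm_smul, Int.norm_eq_abs, abs_of_pos hm']
    _ ≤ C * (coordNorm b γ * coordNorm b s) := hsmul ▸ hmul γ s
    _ ≤ C * (coordNorm b γ * m) := by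
        have := coordNorm_nonneg b γ
        gcongr
    _ = m * (C * coordNorm b γ) := by ring

variable [IsDedekindDomain R] [Module.Free ℤ R]

theorem exists_sub_mem_coordNorm_le_absNorm_rpow :
    ∃ C, 0 ≤ C ∧ ∀ I : Ideal R, I ≠ ⊥ → ∀ α, ∃ ρ, α - ρ ∈ I ∧
      coordNorm b ρ ≤ C * (Ideal.absNorm I : ℝ) ^ (Fintype.card ι : ℝ)⁻¹ := by
  have := Module.Finite.of_basis b
  have := b.index_nonempty
  obtain ⟨C, hC, hmul⟩ := exists_coordNorm_mul_le b
  refine ⟨C, hC, fun I hI α => ?_⟩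
  have := Ideal.finiteIndex hI
  obtain ⟨γ, hγI, hγ₀, hγ⟩ := exists_ne_zero_mem_coordNorm_le b I.toAddSubgroup
  have hm : 0 < (Ideal.absNorm (Ideal.span {γ}) : ℤ) := by
    rw [Nat.cast_pos, Nat.pos_iff_ne_zero, Ne, Ideal.absNorm_eq_zero_iff,
      Ideal.span_singleton_eq_bot]
    exact hγ₀
  have hdvd : γ ∣ ((Ideal.absNorm (Ideal.span {γ}) : ℤ) : R) := by
    rw [Int.cast_natCast, ← Ideal.mem_span_singleton]
    exact Ideal.absNorm_mem _
  obtain ⟨q, hq⟩ := exists_coordNorm_sub_mul_le b hC hmul hm hdvd α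
  refine ⟨α - γ * q, ?_, hq.trans (mul_le_mul_of_nonneg_left hγ hC)⟩
  rw [sub_sub_cancel]
  exact I.mul_mem_right q hγI

variable [DecidableEq ι]

theorem exists_abs_boxCount_sub_le {c : ℝ} (hc : 0 ≤ c) :
    ∃ A, 0 ≤ A ∧ ∀ (X : ℕ) (I : Ideal R), I ≠ ⊥ →
      (Ideal.absNorm I : ℝ) ≤ (c * X) ^ Fintype.card ι →
      |(boxCount b X I : ℝ) - (X : ℝ) ^ Fintype.card ι / Ideal.absNorm I| ≤
        A * (X : ℝ) ^ (Fintype.card ι - 1) *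
          (Ideal.absNorm I : ℝ) ^ ((Fintype.card ι : ℝ)⁻¹ - 1) := by
  have := Module.Finite.of_basis b
  have := b.index_nonempty
  obtain ⟨C, hC, hrep⟩ := exists_sub_mem_coordNorm_le_absNorm_rpow b
  set d := Fintype.card ι
  refine ⟨2 * C * d * (1 + 2 * (C * c)) ^ (d - 1), by positivity, fun X I hI hN => ?_⟩
  have := Ideal.finiteIndex hI
  have hN₀ : (0 : ℝ) < Ideal.absNorm I := by
    exact_mod_cast Nat.pos_iff_ne_zero.2 (Ideal.absNorm_eq_zero_iff.not.2 hI)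
  have hcount := abs_boxCount_mul_index_sub_le b (H := I.toAddSubgroup)
    (T := C * (Ideal.absNorm I : ℝ) ^ (d : ℝ)⁻¹) (by positivity) (hrep I hI) X
  rw [← Ideal.absNorm_eq_index, Submodule.coe_toAddSubgroup] at hcount
  set N : ℝ := ((Ideal.absNorm I : ℕ) : ℝ)
  set y : ℝ := N ^ (d : ℝ)⁻¹
  have hy : y ≤ c * X := by
    rw [← pow_rpow_inv_natCast (by positivity : 0 ≤ c * X) (Fintype.card_ne_zero (α := ι))]
    exact rpow_le_rpow hN₀.le hN (by positivity)
  rw [rpow_sub_one hN₀.ne', ← mul_div_assoc, le_div_iff₀ hN₀]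
  calc |(boxCount b X I : ℝ) - (X : ℝ) ^ d / N| * N
      = |(boxCount b X I : ℝ) * N - (X : ℝ) ^ d| := by
        rw [← abs_of_pos hN₀, ← abs_mul, abs_of_pos hN₀, sub_mul, div_mul_cancel₀ _ hN₀.ne']
    _ ≤ 2 * (C * y) * d * (X + 2 * (C * y)) ^ (d - 1) := hcount
    _ ≤ 2 * (C * y) * d * (X + 2 * (C * (c * X))) ^ (d - 1) := by gcongr
    _ = 2 * C * d * (1 + 2 * (C * c)) ^ (d - 1) * (X : ℝ) ^ (d - 1) * y := by
        rw [mul_assoc _ (_ ^ (d - 1)) ((X : ℝ) ^ _), ← mul_pow]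
        ring

end IdealsInBoxes

section SmallValues

theorem card_le_add_one_of_sub_le {s : Finset ℤ} {D : ℕ} (h : ∀ x ∈ s, ∀ y ∈ s, x - y ≤ D) :
    #s ≤ D + 1 := by
  rcases s.eq_empty_or_nonempty with rfl | hs
  · simp
  have hsub : s ⊆ Icc (s.min' hs) (s.min' hs + D) := fun x hx =>
    mem_Icc.2 ⟨s.min'_le x hx, by linarith [h x hx _ (s.min'_mem hs)]⟩
  refine (card_le_card hsub).trans ?_
  rw [Int.card_Icc]
  omega

variable {ι M E : Type*} [AddCommGroup M] (b : Module.Basis ι ℤ M)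

theorem sub_eq_zsmul_of_forall_ne [Finite ι] {i : ι} {α β : M}
    (h : ∀ j ≠ i, b.equivFun α j = b.equivFun β j) :
    α - β = (b.equivFun α i - b.equivFun β i) • b i := by
  classical
  refine b.equivFun.injective (funext fun j => ?_)
  rcases eq_or_ne j i with rfl | hj
  · simp
  · simpa [sub_eq_zero, Finsupp.single_apply, hj.symm] using h j hj

variable [SeminormedAddCommGroup E] [NormedSpace ℝ E] (f : M →+ E)

theorem card_le_of_forall_ne_of_norm_le [Finite ι] {i : ι} (hi : 0 < ‖f (b i)‖) {T : ℝ}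
    {s : Finset M} (hs : ∀ α ∈ s, ∀ β ∈ s, ∀ j ≠ i, b.equivFun α j = b.equivFun β j)
    (hf : ∀ α ∈ s, ‖f α‖ ≤ T) : #s ≤ ⌊2 * T / ‖f (b i)‖⌋₊ + 1 := by
  have hinj : Set.InjOn (fun α => b.equivFun α i) s := fun α hα β hβ hαβ => by
    have h := sub_eq_zsmul_of_forall_ne b (hs α hα β hβ)
    rwa [sub_eq_zero.2 hαβ, zero_smul, sub_eq_zero] at h
  rw [← card_image_of_injOn hinj]
  refine card_le_add_one_of_sub_le ?_
  simp only [forall_mem_image]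
  intro α hα β hβ
  have hnorm : |((b.equivFun α i - b.equivFun β i : ℤ) : ℝ)| * ‖f (b i)‖ ≤ 2 * T := by
    rw [← Real.norm_eq_abs, ← norm_zsmul ℝ, ← map_zsmul,
      ← sub_eq_zsmul_of_forall_ne b (hs α hα β hβ), map_sub, two_mul]
    exact (norm_sub_le _ _).trans (add_le_add (hf α hα) (hf β hβ))
  rw [← le_div_iff₀ hi, ← Int.cast_abs, ← Nat.cast_natAbs] at hnorm
  exact Int.le_natAbs.trans (by exact_mod_cast Nat.le_floor hnorm)

variable [Fintype ι] [DecidableEq ι]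

-- On the points whose coordinates other than the `i`-th are prescribed, `f` varies by integral
-- multiples of `f (b i)`.
theorem card_filter_norm_le {i : ι} (hi : 0 < ‖f (b i)‖) {T : ℝ} (hT : 0 ≤ T) (X : ℕ) :
    (#{α ∈ coordBox b 0 X | ‖f α‖ ≤ T} : ℝ) ≤
      (2 * T / ‖f (b i)‖ + 1) * (X : ℝ) ^ (Fintype.card ι - 1) := by
  set S := {α ∈ coordBox b 0 X | ‖f α‖ ≤ T}
  set t : Finset ({j // j ≠ i} → ℤ) := Fintype.piFinset fun _ => Ioc 0 (X : ℤ)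
  set p : M → {j // j ≠ i} → ℤ := fun α j => b.equivFun α j
  have hp : ∀ α ∈ S, p α ∈ t := fun α hα =>
    Fintype.mem_piFinset.2 fun j => mem_Ioc.2 ((mem_coordBox b).1 (mem_filter.1 hα).1 j)
  have ht : #t = X ^ (Fintype.card ι - 1) := by simp [t, Fintype.card_subtype_compl]
  have hfiber : ∀ z ∈ t, #{α ∈ S | p α = z} ≤ ⌊2 * T / ‖f (b i)‖⌋₊ + 1 := fun z _ =>
    card_le_of_forall_ne_of_norm_le b f hi
      (fun α hα β hβ j hj =>
        congrFun ((mem_filter.1 hα).2.trans (mem_filter.1 hβ).2.symm) ⟨j, hj⟩)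
      fun α hα => (mem_filter.1 (mem_filter.1 hα).1).2
  have hcard : #S ≤ (⌊2 * T / ‖f (b i)‖⌋₊ + 1) * #t :=
    card_le_mul_card_image_of_maps_to hp _ hfiber
  calc (#S : ℝ) ≤ ((⌊2 * T / ‖f (b i)‖⌋₊ + 1 : ℕ) : ℝ) * (X : ℝ) ^ (Fintype.card ι - 1) := by
        rw [ht] at hcard
        exact_mod_cast hcard
    _ ≤ _ := by
        push_cast
        gcongr
        exact Nat.floor_le (by positivity)

theorem posLog_div_max_one_le_sum (u : ℝ) (X : ℕ) :
    log⁺ (X / max 1 u) ≤ ∑ j ∈ Icc 1 X, if u ≤ j + 1 then (j : ℝ)⁻¹ else 0 := by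
  have hmax : 0 < max 1 u := by positivity
  have hnonneg : ∀ n : ℕ, (0 : ℝ) ≤ ∑ j ∈ Icc 1 n, if u ≤ j + 1 then (j : ℝ)⁻¹ else 0 := fun n =>
    sum_nonneg fun j _ => by positivity
  have hlog : ∀ n : ℕ,
      log ((n + 1) / max 1 u) ≤ ∑ j ∈ Icc 1 n, if u ≤ j + 1 then (j : ℝ)⁻¹ else 0 := by
    intro n
    induction n with
    | zero => simpa using log_nonneg (le_max_left 1 u)
    | succ n ih =>
      rw [sum_Icc_succ_top n.succ_pos]
      push_cast
      split_ifs with hu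
      · have hratio : ((n : ℝ) + 1 + 1) / max 1 u =
            (n + 1) / max 1 u * (1 + ((n : ℝ) + 1)⁻¹) := by
          field_simp
        rw [hratio, log_mul (by positivity) (by positivity)]
        refine add_le_add ih ((log_le_sub_one_of_pos (by positivity)).trans_eq ?_)
        ring
      · rw [add_zero]
        refine (log_nonpos (by positivity) ?_).trans (hnonneg n)
        rw [div_le_one hmax]
        exact (not_le.1 hu).le.trans (le_max_right 1 u)
  refine max_le (hnonneg X) ?_
  rcases X.eq_zero_or_pos with rfl | hX
  · simp
  · refine (log_le_log (by positivity) ?_).trans (hlog X)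
    gcongr
    linarith

theorem exists_sum_posLog_div_norm_le {i : ι} (hi : 0 < ‖f (b i)‖) :
    ∃ C, 0 ≤ C ∧ ∀ X : ℕ, ∑ α ∈ coordBox b 0 X, log⁺ (X / max 1 ‖f α‖) ≤
      C * (X : ℝ) ^ Fintype.card ι := by
  set δ := ‖f (b i)‖
  refine ⟨4 / δ + 1, by positivity, fun X => ?_⟩
  have hterm : ∀ j ∈ Icc 1 X,
      ∑ α ∈ coordBox b 0 X, (if ‖f α‖ ≤ j + 1 then (j : ℝ)⁻¹ else 0) ≤
        (4 / δ + 1) * (X : ℝ) ^ (Fintype.card ι - 1) := fun j hj => by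
    have hj₁ : (1 : ℝ) ≤ j := by exact_mod_cast (mem_Icc.1 hj).1
    rw [← sum_filter, sum_const, nsmul_eq_mul]
    calc (#{α ∈ coordBox b 0 X | ‖f α‖ ≤ j + 1} : ℝ) * (j : ℝ)⁻¹
        ≤ (2 * (j + 1) / δ + 1) * (X : ℝ) ^ (Fintype.card ι - 1) * (j : ℝ)⁻¹ := by
          gcongr
          exact card_filter_norm_le b f hi (by positivity) X
      _ = (2 * (1 + (j : ℝ)⁻¹) / δ + (j : ℝ)⁻¹) * (X : ℝ) ^ (Fintype.card ι - 1) := by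
          field_simp
      _ ≤ (2 * (1 + 1) / δ + 1) * (X : ℝ) ^ (Fintype.card ι - 1) := by
          have := inv_le_one_of_one_le₀ hj₁
          gcongr
      _ = (4 / δ + 1) * (X : ℝ) ^ (Fintype.card ι - 1) := by norm_num
  calc ∑ α ∈ coordBox b 0 X, log⁺ (X / max 1 ‖f α‖)
      ≤ ∑ α ∈ coordBox b 0 X, ∑ j ∈ Icc 1 X, (if ‖f α‖ ≤ j + 1 then (j : ℝ)⁻¹ else 0) :=
        sum_le_sum fun α _ => posLog_div_max_one_le_sum _ X
    _ = ∑ j ∈ Icc 1 X, ∑ α ∈ coordBox b 0 X, (if ‖f α‖ ≤ j + 1 then (j : ℝ)⁻¹ else 0) := sum_comm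
    _ ≤ ∑ _j ∈ Icc 1 X, (4 / δ + 1) * (X : ℝ) ^ (Fintype.card ι - 1) := sum_le_sum hterm
    _ = (4 / δ + 1) * (X : ℝ) ^ Fintype.card ι := by
        have : Nonempty ι := ⟨i⟩
        rw [sum_const, Nat.card_Icc, Nat.add_sub_cancel, nsmul_eq_mul, mul_left_comm,
          mul_pow_sub_one Fintype.card_ne_zero]

end SmallValues

section NormsInBoxes

open NumberField

theorem card_mul_log_sub_log_prod_le {κ : Type*} [Fintype κ] {u : κ → ℝ}
    (hu : 0 ≤ log (∏ k, u k)) {x : ℝ} (hx : 0 < x) :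
    Fintype.card κ * log x - log (∏ k, u k) ≤
      Fintype.card κ * ∑ k, log⁺ (x / max 1 (u k)) := by
  have hterm : ∀ k, 0 ≤ log⁺ (x / max 1 (u k)) := fun _ => posLog_nonneg
  have hsum : 0 ≤ ∑ k, log⁺ (x / max 1 (u k)) := sum_nonneg fun k _ => hterm k
  by_cases hsmall : ∃ k, u k < 1
  · obtain ⟨k, hk⟩ := hsmall
    have hlog : log x ≤ ∑ k, log⁺ (x / max 1 (u k)) := calc
      log x = log (x / max 1 (u k)) := by rw [max_eq_left hk.le, div_one]
      _ ≤ log⁺ (x / max 1 (u k)) := le_max_right _ _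
      _ ≤ _ := single_le_sum (fun k _ => hterm k) (mem_univ k)
    exact (sub_le_self _ hu).trans (by gcongr)
  · push Not at hsmall
    have hpos : ∀ k, 0 < u k := fun k => one_pos.trans_le (hsmall k)
    calc Fintype.card κ * log x - log (∏ k, u k) = ∑ k, log (x / max 1 (u k)) := by
          rw [log_prod fun k _ => (hpos k).ne', ← nsmul_eq_mul, ← card_univ, ← sum_const,
            ← sum_sub_distrib]
          refine sum_congr rfl fun k _ => ?_
          rw [max_eq_right (hsmall k), log_div hx.ne' (hpos k).ne']
      _ ≤ ∑ k, log⁺ (x / max 1 (u k)) := sum_le_sum fun k _ => le_max_right _ _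
      _ ≤ Fintype.card κ * ∑ k, log⁺ (x / max 1 (u k)) := by
          rcases isEmpty_or_nonempty κ with hκ | hκ
          · simp
          · exact le_mul_of_one_le_left hsum (by exact_mod_cast Fintype.card_pos)

variable {K : Type*} [Field K] [NumberField K]

theorem absNorm_span_singleton_eq_prod_norm (α : 𝓞 K) :
    (Ideal.absNorm (Ideal.span {α}) : ℝ) = ∏ σ : K →+* ℂ, ‖σ α‖ := by
  have h := congrArg (‖·‖) (Algebra.norm_eq_prod_embeddings ℚ ℂ (α : K))
  rw [norm_prod, ← Fintype.prod_equiv (RingHom.equivRatAlgHom K ℂ) (fun σ => ‖σ (α : K)‖) _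
    fun _ => rfl] at h
  rw [← h, ← Algebra.coe_norm_int, Ideal.absNorm_span_singleton]
  simp [Nat.cast_natAbs]

variable {ι : Type*} [Fintype ι] (b : Module.Basis ι ℤ (𝓞 K))

include b in
theorem card_embeddings_eq_card_basis : Fintype.card (K →+* ℂ) = Fintype.card ι := by
  rw [Embeddings.card, ← RingOfIntegers.rank, Module.finrank_eq_card_basis b]

variable [DecidableEq ι]

theorem exists_absNorm_le_of_mem_coordBox :
    ∃ c : ℕ, 0 < c ∧ ∀ X : ℕ, ∀ α ∈ coordBox b 0 X,
      Ideal.absNorm (Ideal.span {α}) ≤ (c * X) ^ Fintype.card ι := by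
  set f : (K →+* ℂ) → 𝓞 K →+ ℂ := fun σ => (σ.comp (algebraMap (𝓞 K) K) : 𝓞 K →+* ℂ)
  set C : ℝ := ∑ σ, ∑ i, ‖f σ (b i)‖
  refine ⟨⌈C⌉₊ + 1, Nat.succ_pos _, fun X α hα => ?_⟩
  have hf : ∀ σ, ‖f σ α‖ ≤ (⌈C⌉₊ + 1) * X := fun σ => by
    have hC : ∑ i, ‖f σ (b i)‖ ≤ ⌈C⌉₊ + 1 :=
      ((single_le_sum (fun τ _ => sum_nonneg fun i _ => norm_nonneg (f τ (b i)))
        (mem_univ σ)).trans (Nat.le_ceil C)).trans (le_add_of_nonneg_right zero_le_one)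
    have := coordNorm_nonneg b α
    refine (norm_map_le_sum_mul_coordNorm b (f σ) α).trans ?_
    gcongr
    exact coordNorm_le_of_mem_coordBox b hα
  have hnorm : (Ideal.absNorm (Ideal.span {α}) : ℝ) ≤ ((⌈C⌉₊ + 1) * X) ^ Fintype.card ι := by
    rw [absNorm_span_singleton_eq_prod_norm, ← card_embeddings_eq_card_basis b, ← card_univ,
      ← prod_const]
    exact prod_le_prod (fun σ _ => norm_nonneg _) fun σ _ => hf σ
  exact_mod_cast hnorm

theorem exists_boxCount_le_mul_div_absNorm :
    ∃ A, 0 ≤ A ∧ ∀ (X : ℕ) (I : Ideal (𝓞 K)), I ≠ ⊥ →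
      (boxCount b X I : ℝ) ≤ A * ((X : ℝ) ^ Fintype.card ι / Ideal.absNorm I) := by
  have := b.index_nonempty
  obtain ⟨c, -, hnorm⟩ := exists_absNorm_le_of_mem_coordBox b
  obtain ⟨A, hA, hcount⟩ := exists_abs_boxCount_sub_le b (Nat.cast_nonneg (α := ℝ) c)
  refine ⟨1 + A * c, by positivity, fun X I hI => ?_⟩
  rcases Nat.eq_zero_or_pos (boxCount b X I) with h₀ | hpos
  · rw [h₀, Nat.cast_zero]
    positivity
  obtain ⟨α, hα, hαI⟩ : ∃ α ∈ coordBox b 0 X, α ∈ I := by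
    simpa only [boxCount, card_pos, filter_nonempty_iff, SetLike.mem_coe] using hpos
  have hα₀ : Ideal.absNorm (Ideal.span {α}) ≠ 0 := by
    rw [Ne, Ideal.absNorm_eq_zero_iff, Ideal.span_singleton_eq_bot]
    exact ne_zero_of_mem_coordBox b hα
  have hN : (Ideal.absNorm I : ℝ) ≤ (c * X) ^ Fintype.card ι := by
    have hdvd := Ideal.absNorm_dvd_absNorm_of_le ((Ideal.span_singleton_le_iff_mem I).2 hαI)
    exact_mod_cast (Nat.le_of_dvd (Nat.pos_of_ne_zero hα₀) hdvd).trans (hnorm X α hα)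
  have hN₀ : (0 : ℝ) < Ideal.absNorm I := by
    exact_mod_cast Nat.pos_of_ne_zero (Ideal.absNorm_eq_zero_iff.not.2 hI)
  set d := Fintype.card ι
  have hroot : (Ideal.absNorm I : ℝ) ^ (d : ℝ)⁻¹ ≤ c * X := by
    rw [← pow_rpow_inv_natCast (by positivity : 0 ≤ (c : ℝ) * X) (Fintype.card_ne_zero (α := ι))]
    exact rpow_le_rpow hN₀.le hN (by positivity)
  calc (boxCount b X I : ℝ)
      ≤ (X : ℝ) ^ d / Ideal.absNorm I +
          A * (X : ℝ) ^ (d - 1) * (Ideal.absNorm I : ℝ) ^ ((d : ℝ)⁻¹ - 1) := by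
        linarith [(abs_le.1 (hcount X I hI hN)).2]
    _ ≤ (X : ℝ) ^ d / Ideal.absNorm I + A * (X : ℝ) ^ (d - 1) * (c * X / Ideal.absNorm I) := by
        rw [rpow_sub_one hN₀.ne']
        gcongr
    _ = (1 + A * c) * ((X : ℝ) ^ d / Ideal.absNorm I) := by
        rw [← pow_sub_one_mul (Fintype.card_ne_zero (α := ι)) (X : ℝ)]
        ring

theorem exists_sum_log_absNorm_le :
    ∃ C, 0 ≤ C ∧ ∀ X : ℕ, 0 < X → ∑ α ∈ coordBox b 0 X, log (Ideal.absNorm (Ideal.span {α})) ≤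
      (X : ℝ) ^ Fintype.card ι * (log ((X : ℝ) ^ Fintype.card ι) + C) := by
  have := b.index_nonempty
  obtain ⟨c, hc, hnorm⟩ := exists_absNorm_le_of_mem_coordBox b
  refine ⟨log ((c : ℝ) ^ Fintype.card ι), by rw [← Nat.cast_pow]; positivity, fun X hX => ?_⟩
  calc ∑ α ∈ coordBox b 0 X, log (Ideal.absNorm (Ideal.span {α}))
      ≤ ∑ _α ∈ coordBox b 0 X, log ((c * X) ^ Fintype.card ι) := by
        refine sum_le_sum fun α hα => log_le_log ?_ (by exact_mod_cast hnorm X α hα)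
        rw [Nat.cast_pos, Nat.pos_iff_ne_zero, Ne, Ideal.absNorm_eq_zero_iff,
          Ideal.span_singleton_eq_bot]
        exact ne_zero_of_mem_coordBox b hα
    _ = _ := by
        rw [sum_const, card_coordBox_zero, nsmul_eq_mul, mul_pow,
          log_mul (by positivity) (by positivity), Nat.cast_pow, add_comm (log _)]

theorem exists_le_sum_log_absNorm :
    ∃ C, 0 ≤ C ∧ ∀ X : ℕ, 0 < X →
      (X : ℝ) ^ Fintype.card ι * (log ((X : ℝ) ^ Fintype.card ι) - C) ≤
        ∑ α ∈ coordBox b 0 X, log (Ideal.absNorm (Ideal.span {α})) := by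
  have hne : ∀ (σ : K →+* ℂ) i, 0 < ‖(σ.comp (algebraMap (𝓞 K) K) : 𝓞 K →+ ℂ) (b i)‖ :=
    fun σ i => norm_pos_iff.2 <| (map_ne_zero_iff (σ.comp (algebraMap (𝓞 K) K))
      (σ.injective.comp RingOfIntegers.coe_injective)).2 (b.ne_zero i)
  obtain ⟨i⟩ := b.index_nonempty
  choose C hC hsum using fun σ : K →+* ℂ =>
    exists_sum_posLog_div_norm_le b (σ.comp (algebraMap (𝓞 K) K) : 𝓞 K →+ ℂ) (hne σ i)
  set d := Fintype.card ι
  refine ⟨d * ∑ σ, C σ, mul_nonneg (Nat.cast_nonneg _) (sum_nonneg fun σ _ => hC σ), fun X hX => ?_⟩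
  have hpointwise : ∀ α : 𝓞 K, log ((X : ℝ) ^ d) - log (Ideal.absNorm (Ideal.span {α})) ≤
      d * ∑ σ : K →+* ℂ, log⁺ (X / max 1 ‖σ α‖) := fun α => by
    have h := card_mul_log_sub_log_prod_le (u := fun σ : K →+* ℂ => ‖σ α‖) (x := X)
      (by rw [← absNorm_span_singleton_eq_prod_norm]; positivity) (by exact_mod_cast hX)
    rwa [← absNorm_span_singleton_eq_prod_norm, card_embeddings_eq_card_basis b, ← log_pow] at h
  have htotal : (X : ℝ) ^ d * log ((X : ℝ) ^ d) -
      ∑ α ∈ coordBox b 0 X, log (Ideal.absNorm (Ideal.span {α})) ≤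
        (X : ℝ) ^ d * (d * ∑ σ, C σ) := calc
    _ = ∑ α ∈ coordBox b 0 X,
          (log ((X : ℝ) ^ d) - log (Ideal.absNorm (Ideal.span {α}))) := by
        rw [sum_sub_distrib, sum_const, card_coordBox_zero, nsmul_eq_mul, Nat.cast_pow]
    _ ≤ ∑ α ∈ coordBox b 0 X, d * ∑ σ : K →+* ℂ, log⁺ (X / max 1 ‖σ α‖) :=
        sum_le_sum fun α _ => hpointwise α
    _ = d * ∑ σ : K →+* ℂ, ∑ α ∈ coordBox b 0 X, log⁺ (X / max 1 ‖σ α‖) := by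
        rw [← mul_sum, sum_comm]
    _ ≤ d * ∑ σ, C σ * (X : ℝ) ^ d := by
        gcongr with σ
        exact hsum σ X
    _ = _ := by rw [← sum_mul]; ring
  linarith

end NormsInBoxes

section PrimeIdeals

variable (R : Type*) [CommRing R] [IsDedekindDomain R] [Module.Free ℤ R] [Module.Finite ℤ R]
  [CharZero R]

/-- The nonzero prime ideals of norm at most `n`. -/
noncomputable def primesLE (n : ℕ) : Finset (Ideal R) :=
  ((Ideal.finite_setOfPred_absNorm_le n).subset
    fun _ hP => hP.2.2 : {P : Ideal R | P.IsPrime ∧ P ≠ ⊥ ∧ Ideal.absNorm P ≤ n}.Finite).toFinset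

/-- The number of nonzero prime ideals of norm exactly `m`. -/
noncomputable def primeCount (m : ℕ) : ℕ := #{P ∈ primesLE R m | Ideal.absNorm P = m}

variable {R}

theorem mem_primesLE {n : ℕ} {P : Ideal R} :
    P ∈ primesLE R n ↔ P.IsPrime ∧ P ≠ ⊥ ∧ Ideal.absNorm P ≤ n :=
  Set.Finite.mem_toFinset _

theorem prime_of_mem_primesLE {n : ℕ} {P : Ideal R} (hP : P ∈ primesLE R n) : Prime P :=
  Ideal.prime_of_isPrime (mem_primesLE.1 hP).2.1 (mem_primesLE.1 hP).1

theorem one_lt_absNorm_of_mem_primesLE {n : ℕ} {P : Ideal R} (hP : P ∈ primesLE R n) :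
    1 < Ideal.absNorm P := by
  rw [mem_primesLE] at hP
  exact Nat.one_lt_iff_ne_zero_and_ne_one.2 ⟨Ideal.absNorm_eq_zero_iff.not.2 hP.2.1,
    Ideal.absNorm_eq_one_iff.not.2 hP.1.ne_top⟩

theorem primesLE_mono : Monotone (primesLE R) := fun m n hmn P hP => by
  rw [mem_primesLE] at hP ⊢
  exact ⟨hP.1, hP.2.1, hP.2.2.trans hmn⟩

theorem sum_primesLE (n : ℕ) (f : ℕ → ℝ) :
    ∑ P ∈ primesLE R n, f (Ideal.absNorm P) = ∑ m ∈ Icc 1 n, primeCount R m * f m := by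
  rw [← sum_fiberwise_of_maps_to (t := Icc 1 n) (g := fun P => Ideal.absNorm P) fun P hP =>
    mem_Icc.2 ⟨(one_lt_absNorm_of_mem_primesLE hP).le, (mem_primesLE.1 hP).2.2⟩]
  refine sum_congr rfl fun m hm => ?_
  have hfiber : {P ∈ primesLE R n | Ideal.absNorm P = m} =
      {P ∈ primesLE R m | Ideal.absNorm P = m} := by
    ext P
    simp only [mem_filter, mem_primesLE, and_congr_left_iff]
    rintro rfl
    simp [(mem_Icc.1 hm).2]
  rw [hfiber, sum_congr rfl fun P hP => by rw [(mem_filter.1 hP).2], sum_const, nsmul_eq_mul,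
    primeCount]

theorem primorial_mem_of_mem_primesLE {n : ℕ} {P : Ideal R} (hP : P ∈ primesLE R n) :
    (primorial n : R) ∈ P := by
  obtain ⟨hprime, hP₀, hle⟩ := mem_primesLE.1 hP
  have := hprime.isMaximal hP₀
  obtain ⟨p, k, hk, hpP, hp, hnorm⟩ := Ideal.exists_prime_and_absNorm_eq_pow P
  have hpn : p ≤ n := (Nat.le_self_pow hk.ne' p).trans (hnorm ▸ hle)
  exact P.mem_of_dvd (Nat.cast_dvd_cast (hp.dvd_primorial_iff.2 hpn)) hpP

theorem sum_log_absNorm_primesLE_le (n : ℕ) :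
    ∑ P ∈ primesLE R n, log (Ideal.absNorm P) ≤ Module.finrank ℤ R * log 4 * n := by
  have hdvd : ∏ P ∈ primesLE R n, P ∣ Ideal.span {(primorial n : R)} :=
    prod_primes_dvd _ (fun P hP => prime_of_mem_primesLE hP) fun P hP => Ideal.dvd_iff_le.2 <|
      (Ideal.span_singleton_le_iff_mem P).2 (primorial_mem_of_mem_primesLE hP)
  have hnorm := map_dvd Ideal.absNorm hdvd
  rw [map_prod, Ideal.absNorm_span_natCast] at hnorm
  have hprod : ∏ P ∈ primesLE R n, Ideal.absNorm P ≤ (4 ^ n) ^ Module.finrank ℤ R :=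
    (Nat.le_of_dvd (pow_pos (primorial_pos n) _) hnorm).trans
      (Nat.pow_le_pow_left (primorial_le_four_pow n) _)
  have hpos : ∀ P ∈ primesLE R n, 0 < Ideal.absNorm P := fun P hP =>
    (one_lt_absNorm_of_mem_primesLE hP).pos
  calc ∑ P ∈ primesLE R n, log (Ideal.absNorm P)
      = log ((∏ P ∈ primesLE R n, Ideal.absNorm P : ℕ) : ℝ) := by
        rw [Nat.cast_prod, log_prod fun P hP => by exact_mod_cast (hpos P hP).ne']
    _ ≤ log ((4 ^ n) ^ Module.finrank ℤ R) :=
        log_le_log (by exact_mod_cast prod_pos hpos) (by exact_mod_cast hprod)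
    _ = Module.finrank ℤ R * log 4 * n := by
        rw [log_pow, log_pow]
        ring

theorem sum_log_absNorm_mul_le {w : ℕ → ℝ} (hw : AntitoneOn w (Set.Ici 1)) (hw₀ : ∀ m, 0 ≤ w m)
    (n : ℕ) :
    ∑ P ∈ primesLE R n, log (Ideal.absNorm P) * w (Ideal.absNorm P) ≤
      Module.finrank ℤ R * log 4 * ∑ m ∈ Icc 1 n, w m := by
  rw [sum_primesLE n fun m => log m * w m, mul_sum]
  simp only [← mul_assoc]
  refine sum_mul_le_sum_mul_of_antitoneOn (fun m => ?_) hw hw₀ n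
  rw [sum_const, Nat.card_Icc, Nat.add_sub_cancel, nsmul_eq_mul, mul_comm (m : ℝ),
    ← sum_primesLE m fun k => log k]
  exact sum_log_absNorm_primesLE_le m

theorem sum_log_absNorm_mul_rpow_le {s : ℝ} (hs₀ : 0 < s) (hs₁ : s ≤ 1) (n : ℕ) :
    ∑ P ∈ primesLE R n, log (Ideal.absNorm P) * (Ideal.absNorm P : ℝ) ^ (s - 1) ≤
      Module.finrank ℤ R * log 4 * ((n : ℝ) ^ s / s) := by
  refine (sum_log_absNorm_mul_le (w := fun m => (m : ℝ) ^ (s - 1)) ?_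
    (fun m => by positivity) n).trans ?_
  · intro m hm k _ hmk
    exact rpow_le_rpow_of_nonpos (Nat.cast_pos.2 hm) (Nat.cast_le.2 hmk) (sub_nonpos.2 hs₁)
  · gcongr
    exact sum_rpow_sub_one_le hs₀ hs₁ n

theorem sum_log_absNorm_mul_inv_sq_le (n : ℕ) :
    ∑ P ∈ primesLE R n, log (Ideal.absNorm P) * ((Ideal.absNorm P : ℝ) ^ 2)⁻¹ ≤
      Module.finrank ℤ R * log 4 * 2 := by
  refine (sum_log_absNorm_mul_le (w := fun m => ((m : ℝ) ^ 2)⁻¹) ?_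
    (fun m => by positivity) n).trans ?_
  · intro m hm k _ hmk
    have : (0 : ℝ) < m := Nat.cast_pos.2 hm
    dsimp only
    gcongr
  · have hsum := sum_Ioo_inv_sq_le (α := ℝ) 0 (n + 1)
    have hIcc : Ioo 0 (n + 1) = Icc 1 n := by
      ext m
      simp only [mem_Ioo, mem_Icc]
      omega
    rw [hIcc, Nat.cast_zero, zero_add, div_one] at hsum
    gcongr

end PrimeIdeals

section Factorization

variable {R : Type*} [CommRing R] [IsDedekindDomain R]

open UniqueFactorizationMonoid

theorem le_pow_iff_le_count_normalizedFactors [DecidableEq (Ideal R)] {P I : Ideal R}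
    (hP : Prime P) (hI : I ≠ ⊥) {k : ℕ} : I ≤ P ^ k ↔ k ≤ (normalizedFactors I).count P := by
  rw [← Ideal.dvd_iff_le, pow_dvd_iff_le_emultiplicity,
    emultiplicity_eq_count_normalizedFactors hP.irreducible hI, normalize_eq, Nat.cast_le]

variable [Module.Free ℤ R] [Module.Finite ℤ R] [CharZero R]

theorem log_absNorm_eq_sum_count [DecidableEq (Ideal R)] {I : Ideal R} (hI : I ≠ ⊥) {Y : ℕ}
    (hY : Ideal.absNorm I ≤ Y) : log (Ideal.absNorm I) =
      ∑ P ∈ primesLE R Y, log (Ideal.absNorm P) * (normalizedFactors I).count P := by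
  have hN₀ : 0 < Ideal.absNorm I := Nat.pos_of_ne_zero (Ideal.absNorm_eq_zero_iff.not.2 hI)
  have hsub : (normalizedFactors I).toFinset ⊆ primesLE R Y := fun P hP => by
    rw [Multiset.mem_toFinset] at hP
    have hprime := prime_of_normalized_factor P hP
    refine mem_primesLE.2 ⟨Ideal.isPrime_of_prime hprime, hprime.ne_zero, le_trans ?_ hY⟩
    exact Nat.le_of_dvd hN₀ (map_dvd _ (dvd_of_mem_normalizedFactors hP))
  have hprod : I = ∏ P ∈ primesLE R Y, P ^ (normalizedFactors I).count P := by
    conv_lhs => rw [← Ideal.prod_normalizedFactors_eq_self hI, prod_multiset_count]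
    refine prod_subset hsub fun P _ hP => ?_
    rw [Multiset.mem_toFinset, ← Multiset.count_eq_zero] at hP
    rw [hP, pow_zero]
  conv_lhs => rw [hprod]
  simp only [map_prod, map_pow, Nat.cast_prod, Nat.cast_pow]
  rw [log_prod fun P hP => pow_ne_zero _
    (by exact_mod_cast (one_lt_absNorm_of_mem_primesLE hP).ne_bot)]
  exact sum_congr rfl fun P _ => by rw [log_pow, mul_comm]

open Classical in
theorem log_absNorm_eq_sum_card {I : Ideal R} (hI : I ≠ ⊥) {Y : ℕ}
    (hY : Ideal.absNorm I ≤ Y) : log (Ideal.absNorm I) =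
      ∑ P ∈ primesLE R Y, log (Ideal.absNorm P) * #{k ∈ Icc 1 Y | I ≤ P ^ k} := by
  rw [log_absNorm_eq_sum_count hI hY]
  refine sum_congr rfl fun P hP => ?_
  have hN₀ : 0 < Ideal.absNorm I := Nat.pos_of_ne_zero (Ideal.absNorm_eq_zero_iff.not.2 hI)
  have hle : ∀ k, I ≤ P ^ k → k ≤ Y := fun k hk => calc
    k ≤ Ideal.absNorm P ^ k := (Nat.lt_pow_self (one_lt_absNorm_of_mem_primesLE hP)).le
    _ = Ideal.absNorm (P ^ k) := (map_pow _ _ _).symm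
    _ ≤ Ideal.absNorm I := Nat.le_of_dvd hN₀ (Ideal.absNorm_dvd_absNorm_of_le hk)
    _ ≤ Y := hY
  have hIcc : {k ∈ Icc 1 Y | I ≤ P ^ k} = Icc 1 ((normalizedFactors I).count P) := by
    ext k
    rw [mem_filter, mem_Icc, mem_Icc,
      ← le_pow_iff_le_count_normalizedFactors (prime_of_mem_primesLE hP) hI]
    exact ⟨fun h => ⟨h.1.1, h.2⟩, fun h => ⟨⟨h.1, hle k h.2⟩, h.2⟩⟩
  rw [hIcc, Nat.card_Icc, Nat.add_sub_cancel]

theorem sum_log_absNorm_eq_sum_boxCount {ι : Type*} [Fintype ι] [DecidableEq ι]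
    (b : Module.Basis ι ℤ R) {X Y : ℕ}
    (hY : ∀ α ∈ coordBox b 0 X, Ideal.absNorm (Ideal.span {α}) ≤ Y) :
    ∑ α ∈ coordBox b 0 X, log (Ideal.absNorm (Ideal.span {α})) =
      ∑ P ∈ primesLE R Y,
        log (Ideal.absNorm P) * ∑ k ∈ Icc 1 Y, (boxCount b X (P ^ k : Ideal R) : ℝ) := by
  classical
  have := b.index_nonempty
  have hcount : ∀ P : Ideal R, ∑ k ∈ Icc 1 Y, (boxCount b X (P ^ k : Ideal R) : ℝ) =
      ∑ α ∈ coordBox b 0 X, (#{k ∈ Icc 1 Y | Ideal.span {α} ≤ P ^ k} : ℝ) := fun P => by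
    simp only [boxCount, ← sum_boole, Ideal.span_singleton_le_iff_mem, SetLike.mem_coe]
    exact sum_comm
  simp only [hcount, mul_sum]
  rw [sum_comm]
  refine sum_congr rfl fun α hα => log_absNorm_eq_sum_card ?_ (hY α hα)
  rw [Ne, Ideal.span_singleton_eq_bot]
  exact ne_zero_of_mem_coordBox b hα

end Factorization

section FirstTheorem

theorem sum_Icc_two_inv_pow_le {x : ℝ} (hx : 2 ≤ x) (n : ℕ) :
    ∑ k ∈ Icc 2 n, (x ^ k)⁻¹ ≤ 2 * (x ^ 2)⁻¹ := by
  have hinv : x⁻¹ ≤ 2⁻¹ := by gcongr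
  simp only [← inv_pow]
  calc ∑ k ∈ Icc 2 n, x⁻¹ ^ k = ∑ k ∈ Ico 2 (n + 1), x⁻¹ ^ k := rfl
    _ ≤ x⁻¹ ^ 2 / (1 - x⁻¹) := geom_sum_Ico_le_of_lt_one (by positivity) (by linarith)
    _ ≤ x⁻¹ ^ 2 / 2⁻¹ := by
        gcongr
        linarith
    _ = 2 * x⁻¹ ^ 2 := by ring

theorem exists_mul_pow_le_lt_mul_pow {c d n : ℕ} (hc : 0 < c) (hd : d ≠ 0) (hn : c ^ d ≤ n) :
    ∃ X, 0 < X ∧ (c * X) ^ d ≤ n ∧ n < (c * (X + 1)) ^ d := by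
  have h₁ : (c * 1) ^ d ≤ n := by rwa [mul_one]
  have hself : ∀ k, k ≤ (c * k) ^ d := fun k =>
    (Nat.le_mul_of_pos_left k hc).trans (Nat.le_self_pow hd _)
  refine ⟨Nat.findGreatest (fun k => (c * k) ^ d ≤ n) n,
    Nat.findGreatest_pos.2 ⟨1, one_pos, (hself 1).trans h₁, h₁⟩,
    Nat.findGreatest_spec (P := fun k => (c * k) ^ d ≤ n) ((hself 1).trans h₁) h₁, ?_⟩
  by_contra! hle
  exact Nat.findGreatest_is_greatest (Nat.lt_succ_self _) ((hself _).trans hle) hle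

theorem isBigO_one_of_abs_sub_log_pow_le {F : ℕ → ℝ} (hF : Monotone F) {c d : ℕ} (hc : 0 < c)
    (hd : d ≠ 0) {C : ℝ} (h : ∀ X : ℕ, 0 < X → |F ((c * X) ^ d) - log ((X : ℝ) ^ d)| ≤ C) :
    (fun n => F n - log n) =O[atTop] fun _ => (1 : ℝ) := by
  refine IsBigO.of_bound (C + log ((c : ℝ) ^ d) + log (2 ^ d)) ?_
  filter_upwards [eventually_ge_atTop (c ^ d)] with n hn
  obtain ⟨X, hX, hle, hlt⟩ := exists_mul_pow_le_lt_mul_pow hc hd hn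
  have hlog_mul : ∀ y : ℕ, 0 < y →
      log (((c * y) ^ d : ℕ) : ℝ) = log ((c : ℝ) ^ d) + log ((y : ℝ) ^ d) := fun y hy => by
    push_cast
    rw [mul_pow, log_mul (by positivity) (by positivity)]
  have hstep : log (((X + 1 : ℕ) : ℝ) ^ d) ≤ log (2 ^ d) + log ((X : ℝ) ^ d) := by
    rw [← log_mul (by positivity) (by positivity), ← mul_pow]
    refine log_le_log (by positivity) (pow_le_pow_left₀ (by positivity) ?_ d)
    have : (1 : ℝ) ≤ X := by exact_mod_cast hX
    push_cast
    linarith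
  have hlower := log_le_log (by positivity) (Nat.cast_le (α := ℝ).2 hle)
  have hupper := log_le_log (Nat.cast_pos.2 ((pow_pos (by positivity) d).trans_le hle))
    (Nat.cast_le (α := ℝ).2 hlt.le)
  rw [hlog_mul _ (by positivity)] at hlower hupper
  have hX₁ := abs_le.1 (h X hX)
  have hX₂ := abs_le.1 (h (X + 1) X.succ_pos)
  have hc₀ : 0 ≤ log ((c : ℝ) ^ d) := by exact_mod_cast log_natCast_nonneg (c ^ d)
  rw [norm_one, mul_one, Real.norm_eq_abs, abs_le]
  constructor <;> linarith [hF hle, hF hlt.le]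

open NumberField

variable {K : Type*} [Field K] [NumberField K] {ι : Type*} [Fintype ι] [DecidableEq ι]
  (b : Module.Basis ι ℤ (𝓞 K))

theorem exists_abs_sum_boxCount_pow_sub_le {c : ℝ} (hc : 0 ≤ c) :
    ∃ A, 0 ≤ A ∧ ∀ (X Y : ℕ) (P : Ideal (𝓞 K)), 0 < Y → 2 ≤ Ideal.absNorm P →
      (Ideal.absNorm P : ℝ) ≤ (c * X) ^ Fintype.card ι →
      |∑ k ∈ Icc 1 Y, (boxCount b X (P ^ k : Ideal (𝓞 K)) : ℝ) -
          (X : ℝ) ^ Fintype.card ι / Ideal.absNorm P| ≤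
        A * (X : ℝ) ^ (Fintype.card ι - 1) *
            (Ideal.absNorm P : ℝ) ^ ((Fintype.card ι : ℝ)⁻¹ - 1) +
          A * (X : ℝ) ^ Fintype.card ι * ((Ideal.absNorm P : ℝ) ^ 2)⁻¹ := by
  obtain ⟨A₁, hA₁, hcount⟩ := exists_abs_boxCount_sub_le b hc
  obtain ⟨A₂, hA₂, hbound⟩ := exists_boxCount_le_mul_div_absNorm b
  refine ⟨A₁ + A₂ * 2, by positivity, fun X Y P hY hP hN => ?_⟩
  set d := Fintype.card ι
  have hP₀ : P ≠ ⊥ := Ideal.absNorm_eq_zero_iff.not.1 (by omega)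
  have htail : ∑ k ∈ Icc 2 Y, (boxCount b X (P ^ k : Ideal (𝓞 K)) : ℝ) ≤
      A₂ * 2 * (X : ℝ) ^ d * ((Ideal.absNorm P : ℝ) ^ 2)⁻¹ := calc
    _ ≤ ∑ k ∈ Icc 2 Y, A₂ * (X : ℝ) ^ d * ((Ideal.absNorm P : ℝ) ^ k)⁻¹ :=
        sum_le_sum fun k _ => (hbound X _ (pow_ne_zero k hP₀)).trans_eq <| by
          rw [map_pow, Nat.cast_pow, div_eq_mul_inv, mul_assoc]
    _ ≤ A₂ * (X : ℝ) ^ d * (2 * ((Ideal.absNorm P : ℝ) ^ 2)⁻¹) := by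
        rw [← mul_sum]
        gcongr
        exact sum_Icc_two_inv_pow_le (by exact_mod_cast hP) Y
    _ = _ := by ring
  rw [← add_sum_Ioc_eq_sum_Icc hY, pow_one, add_sub_right_comm]
  refine (abs_add_le _ _).trans (add_le_add ((hcount X P hP₀ hN).trans ?_) ?_)
  · gcongr
    exact le_add_of_nonneg_right (by positivity)
  · rw [abs_of_nonneg (sum_nonneg fun _ _ => Nat.cast_nonneg _)]
    refine htail.trans ?_
    gcongr
    exact le_add_of_nonneg_left hA₁

theorem exists_abs_sum_log_absNorm_sub_sum_log_div_le {c : ℕ} (hc : 0 < c)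
    (hnorm : ∀ X : ℕ, ∀ α ∈ coordBox b 0 X,
      Ideal.absNorm (Ideal.span {α}) ≤ (c * X) ^ Fintype.card ι) :
    ∃ C, ∀ X : ℕ, 0 < X →
      |∑ α ∈ coordBox b 0 X, log (Ideal.absNorm (Ideal.span {α})) - (X : ℝ) ^ Fintype.card ι *
          ∑ P ∈ primesLE (𝓞 K) ((c * X) ^ Fintype.card ι),
            log (Ideal.absNorm P) / Ideal.absNorm P| ≤
        (X : ℝ) ^ Fintype.card ι * C := by
  have := b.index_nonempty
  obtain ⟨A, hA, hpow⟩ := exists_abs_sum_boxCount_pow_sub_le b (Nat.cast_nonneg (α := ℝ) c)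
  set d := Fintype.card ι
  have hd : d ≠ 0 := Fintype.card_ne_zero
  set B : ℝ := Module.finrank ℤ (𝓞 K) * log 4
  refine ⟨A * B * c * d + A * B * 2, fun X hX => ?_⟩
  set Y := (c * X) ^ d
  have hrpow := sum_log_absNorm_mul_rpow_le (R := 𝓞 K) (s := (d : ℝ)⁻¹) (by positivity)
    (Nat.cast_inv_le_one d) Y
  have hroot : (Y : ℝ) ^ (d : ℝ)⁻¹ = c * X := by
    rw [Nat.cast_pow, pow_rpow_inv_natCast (Nat.cast_nonneg _) hd, Nat.cast_mul]
  rw [hroot, div_inv_eq_mul] at hrpow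
  have hsq := sum_log_absNorm_mul_inv_sq_le (R := 𝓞 K) Y
  rw [sum_log_absNorm_eq_sum_boxCount b (hnorm X), mul_sum, ← sum_sub_distrib]
  calc _ ≤ ∑ P ∈ primesLE (𝓞 K) Y, log (Ideal.absNorm P) *
        (A * (X : ℝ) ^ (d - 1) * (Ideal.absNorm P : ℝ) ^ ((d : ℝ)⁻¹ - 1) +
          A * (X : ℝ) ^ d * ((Ideal.absNorm P : ℝ) ^ 2)⁻¹) := by
        refine (abs_sum_le_sum_abs _ _).trans (sum_le_sum fun P hP => ?_)
        rw [mul_div_left_comm, ← mul_sub, abs_mul, abs_of_nonneg (log_natCast_nonneg _)]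
        refine mul_le_mul_of_nonneg_left (hpow X Y P (by positivity)
          (one_lt_absNorm_of_mem_primesLE hP) ?_) (log_natCast_nonneg _)
        exact_mod_cast (mem_primesLE.1 hP).2.2
    _ = A * (X : ℝ) ^ (d - 1) * ∑ P ∈ primesLE (𝓞 K) Y,
          log (Ideal.absNorm P) * (Ideal.absNorm P : ℝ) ^ ((d : ℝ)⁻¹ - 1) +
        A * (X : ℝ) ^ d * ∑ P ∈ primesLE (𝓞 K) Y,
          log (Ideal.absNorm P) * ((Ideal.absNorm P : ℝ) ^ 2)⁻¹ := by
        rw [mul_sum, mul_sum, ← sum_add_distrib]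
        exact sum_congr rfl fun P _ => by ring
    _ ≤ A * (X : ℝ) ^ (d - 1) * (B * (c * X * d)) + A * (X : ℝ) ^ d * (B * 2) := by gcongr
    _ = (X : ℝ) ^ d * (A * B * c * d + A * B * 2) := by
        rw [← pow_sub_one_mul hd (X : ℝ)]
        ring

omit [DecidableEq ι] in
include b in
theorem exists_abs_sum_log_div_sub_log_pow_le :
    ∃ c : ℕ, 0 < c ∧ ∃ C : ℝ, ∀ X : ℕ, 0 < X →
      |∑ P ∈ primesLE (𝓞 K) ((c * X) ^ Fintype.card ι), log (Ideal.absNorm P) / Ideal.absNorm P -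
        log ((X : ℝ) ^ Fintype.card ι)| ≤ C := by
  classical
  obtain ⟨c, hc, hnorm⟩ := exists_absNorm_le_of_mem_coordBox b
  obtain ⟨C₁, hsum⟩ := exists_abs_sum_log_absNorm_sub_sum_log_div_le b hc hnorm
  obtain ⟨C₂, hC₂, hupper⟩ := exists_sum_log_absNorm_le b
  obtain ⟨C₃, hC₃, hlower⟩ := exists_le_sum_log_absNorm b
  refine ⟨c, hc, C₁ + C₂ + C₃, fun X hX => ?_⟩
  have hXd : 0 < (X : ℝ) ^ Fintype.card ι := by positivity
  have hdiff := abs_le.1 (hsum X hX)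
  refine abs_le.2 ⟨le_of_mul_le_mul_left ?_ hXd, le_of_mul_le_mul_left ?_ hXd⟩
  · linarith [hlower X hX, mul_nonneg hXd.le hC₂]
  · linarith [hupper X hX, mul_nonneg hXd.le hC₃]

variable (K) in
theorem logRemainder_primeCount_isBigO :
    logRemainder (fun m => primeCount (𝓞 K) m / m * log m) =O[atTop] fun _ => (1 : ℝ) := by
  obtain ⟨c, hc, C, hC⟩ := exists_abs_sum_log_div_sub_log_pow_le (Module.finBasis ℤ (𝓞 K))
  have hsum : ∀ n, ∑ m ∈ Icc 1 n, primeCount (𝓞 K) m / m * log m =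
      ∑ P ∈ primesLE (𝓞 K) n, log (Ideal.absNorm P) / Ideal.absNorm P := fun n => by
    rw [sum_primesLE n fun m => log m / m]
    exact sum_congr rfl fun m _ => by ring
  have hmono : Monotone fun n =>
      ∑ P ∈ primesLE (𝓞 K) n, log (Ideal.absNorm P) / Ideal.absNorm P := fun m n hmn =>
    sum_le_sum_of_subset_of_nonneg (primesLE_mono hmn) fun P _ _ =>
      div_nonneg (log_natCast_nonneg _) (Nat.cast_nonneg _)
  have := (Module.finBasis ℤ (𝓞 K)).index_nonempty
  refine (isBigO_one_of_abs_sub_log_pow_le hmono hc Fintype.card_ne_zero hC).congr_left fun n => ?_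
  rw [logRemainder, hsum]

end FirstTheorem

section SecondTheorem

open NumberField

variable {K : Type*} [Field K] [NumberField K]

theorem coe_primesLE_floor {x : ℝ} (hx : 0 ≤ x) :
    (primesLE (𝓞 K) ⌊x⌋₊ : Set (Ideal (𝓞 K))) =
      {P | P.IsPrime ∧ P ≠ ⊥ ∧ (Ideal.absNorm P : ℝ) ≤ x} := by
  ext P
  rw [mem_coe, mem_primesLE, Nat.le_floor_iff hx]
  rfl

theorem logLogRemainder_primeCount (n : ℕ) :
    logLogRemainder (fun m => primeCount (𝓞 K) m / m * log m) n =
      ∑ P ∈ primesLE (𝓞 K) n, 1 / (Ideal.absNorm P : ℝ) - log (log n) := by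
  have hsum := sum_primesLE (R := 𝓞 K) n fun m => 1 / m * log m / log m
  rw [logLogRemainder]
  congr 1
  calc ∑ m ∈ Icc 1 n, primeCount (𝓞 K) m / m * log m / log m
      = ∑ m ∈ Icc 1 n, primeCount (𝓞 K) m * (1 / m * log m / log m) :=
        sum_congr rfl fun m _ => by ring
    _ = ∑ P ∈ primesLE (𝓞 K) n, 1 / (Ideal.absNorm P : ℝ) := by
        rw [← hsum]
        refine sum_congr rfl fun P hP => mul_div_cancel_right₀ _ (log_pos ?_).ne'
        exact_mod_cast one_lt_absNorm_of_mem_primesLE hP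

end SecondTheorem

end NumberFieldMertens

open NumberFieldMertens

/-- Mertens' theorem for number fields: there is a constant `C` such that
`∑_{N(𝔭) ≤ x} 1/N(𝔭) = log log x + C + O(1/log x)`. -/
theorem mertens_number_field (K : Type*) [Field K] [NumberField K] :
    ∃ C : ℝ,
      (fun x : ℝ =>
          (∑ᶠ P ∈ {P : Ideal (NumberField.RingOfIntegers K) |
              P.IsPrime ∧ P ≠ ⊥ ∧ (Ideal.absNorm P : ℝ) ≤ x},
            (1 : ℝ) / (Ideal.absNorm P : ℝ)) -
          Real.log (Real.log x) - C)
        =O[atTop] fun x => 1 / Real.log x := by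
  obtain ⟨C, hC⟩ := exists_logLogRemainder_sub_isBigO (logRemainder_primeCount_isBigO K)
  have hfloor := (hC.comp_tendsto (tendsto_nat_floor_atTop (α := ℝ))).trans one_div_log_floor_isBigO
  refine ⟨C, (hfloor.add log_log_floor_sub_log_log_isBigO).congr'
    ((eventually_ge_atTop 0).mono fun x hx => ?_) .rfl⟩
  dsimp only [Function.comp_apply]
  rw [← coe_primesLE_floor hx, finsum_mem_coe_finset, logLogRemainder_primeCount]
  ring
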